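/- Let N ≥ 1 and let m_1,…,m_N be real constants. Work in the polynomial ring ℝ[x_1,…,x_N], and let M be the N×N matrix over this ring with entries M_{j,i} = j · m_i · x_i^{j−1}, with cofactors A_{u,i}. Then for every u with 1 ≤ u ≤ N and every integer k ≥ 1, the polynomial ∑_{i=1}^N m_i x_i^{k−1} A_{u,i} is divisible in ℝ[x_1,…,x_N] by the Vandermonde product ∏_{1 ≤ q < p ≤ N} (x_q − x_p); equivalently, there is a polynomial h ∈ ℝ[x_1,…,x_N] with ∑_{i=1}^N m_i x_i^{k−1} A_{u,i} = h · ∏_{q < p} (x_q − x_p). -/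

import Mathlib

/-- The `(u,i)` cofactor of an `N × N` matrix over a commutative ring
(`N = N' + 1`): `(−1)^{u+i}` times the determinant of the matrix obtained by
deleting row `u` and column `i`. -/
noncomputable def cofactor {R : Type*} [CommRing R] {N' : ℕ}
    (M : Matrix (Fin (N' + 1)) (Fin (N' + 1)) R) (u i : Fin (N' + 1)) : R :=
  (-1 : R) ^ ((u : ℕ) + (i : ℕ)) * (M.submatrix u.succAbove i.succAbove).det

open MvPolynomial

/-!
A sum `∑ i, v i * A_{u,i}` against the cofactors of row `u` is the determinant of `M` with row `u`
replaced by `v`. Here every row of `M`, as well as the new row, has the form `i ↦ m i * p (x i)`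
for a univariate polynomial `p`. After factoring the `m i` out of the columns, what remains is
`det (p_j (x_i))`, and reducing each `p_j` modulo `∏ i, (T - x i)` changes none of its values at the
nodes but brings its degree below `N`, so this matrix is the Vandermonde matrix times a matrix of
coefficients.
-/

section CommRing

open Polynomial

variable {R : Type*} [CommRing R]

theorem eval_eq_sum_coeff_modByMonic_nodal {ι : Type*} {s : Finset ι} (v : ι → R) (p : R[X])
    {i : ι} (hi : i ∈ s) :
    p.eval (v i) = ∑ k ∈ Finset.range s.card, (p %ₘ Lagrange.nodal s v).coeff k * v i ^ k := by
  nontriviality R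
  have degree_lt : (p %ₘ Lagrange.nodal s v).degree < s.card :=
    (degree_modByMonic_lt p Lagrange.nodal_monic).trans_eq Lagrange.degree_nodal
  calc p.eval (v i) = (p %ₘ Lagrange.nodal s v).eval (v i) :=
        (eval₂_modByMonic_eq_self_of_root (Lagrange.eval_nodal_at_node hi)).symm
    _ = ∑ k ∈ Finset.range s.card, (p %ₘ Lagrange.nodal s v).coeff k * v i ^ k := by
        rw [eval_eq_sum, ← sum_fin _ (by simp) degree_lt,
          Finset.sum_range fun k ↦ (p %ₘ Lagrange.nodal s v).coeff k * v i ^ k]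

variable {n : ℕ}

theorem of_eval_eq_vandermonde_mul_coeff_modByMonic {κ : Type*} (x : Fin n → R) (p : κ → R[X]) :
    Matrix.of (fun i j ↦ (p j).eval (x i)) =
      Matrix.vandermonde x *
        Matrix.of (fun (k : Fin n) j ↦ (p j %ₘ Lagrange.nodal Finset.univ x).coeff k) := by
  ext i j
  simp only [Matrix.of_apply, Matrix.mul_apply, Matrix.vandermonde_apply]
  rw [eval_eq_sum_coeff_modByMonic_nodal x (p j) (Finset.mem_univ i), Finset.card_fin,
    Finset.sum_range]
  simp only [mul_comm]

theorem det_vandermonde_dvd_det_of_eval (x : Fin n → R) (p : Fin n → R[X]) :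
    (Matrix.vandermonde x).det ∣ (Matrix.of fun i j ↦ (p j).eval (x i)).det := by
  rw [of_eval_eq_vandermonde_mul_coeff_modByMonic, Matrix.det_mul]
  exact dvd_mul_right _ _

theorem prod_sub_dvd_det_vandermonde (x : Fin n → R) :
    (∏ q : Fin n, ∏ p ∈ Finset.Ioi q, (x q - x p)) ∣ (Matrix.vandermonde x).det := by
  rw [Matrix.det_vandermonde]
  exact Finset.prod_dvd_prod_of_dvd _ _ fun q _ ↦
    Finset.prod_dvd_prod_of_dvd _ _ fun p _ ↦ dvd_sub_comm.mp dvd_rfl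

theorem sum_mul_cofactor_eq_det_updateRow (M : Matrix (Fin (n + 1)) (Fin (n + 1)) R)
    (u : Fin (n + 1)) (v : Fin (n + 1) → R) :
    ∑ i, v i * cofactor M u i = (M.updateRow u v).det := by
  rw [Matrix.det_succ_row _ u]
  refine Finset.sum_congr rfl fun i _ ↦ ?_
  rw [Matrix.submatrix_updateRow_succAbove, Matrix.updateRow_self, cofactor]
  ring

theorem vandermonde_divides_cofactor_sum_general (x m : Fin (n + 1) → R)
    (M : Matrix (Fin (n + 1)) (Fin (n + 1)) R) (g : Fin (n + 1) → R[X])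
    (hM : ∀ j i, M j i = m i * (g j).eval (x i)) (u : Fin (n + 1)) (f : R[X]) :
    (∏ q : Fin (n + 1), ∏ p ∈ Finset.Ioi q, (x q - x p)) ∣
      ∑ i, m i * f.eval (x i) * cofactor M u i := by
  let P : Matrix (Fin (n + 1)) (Fin (n + 1)) R :=
    Matrix.of fun i j ↦ (Function.update g u f j).eval (x i)
  have updateRow_eq : M.updateRow u (fun i ↦ m i * f.eval (x i)) =
      Matrix.of fun j i ↦ m i * P.transpose j i := by
    ext j i
    by_cases hj : j = u
    · simp [P, hj]
    · simp [P, hj, hM]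
  rw [sum_mul_cofactor_eq_det_updateRow M u fun i ↦ m i * f.eval (x i), updateRow_eq,
    Matrix.det_mul_row, Matrix.det_transpose]
  exact ((prod_sub_dvd_det_vandermonde x).trans (det_vandermonde_dvd_det_of_eval x _)).mul_left _

end CommRing

/-- Let `N = N' + 1 ≥ 1`, let `m_1, …, m_N` be real constants and let `M` be the
`N × N` matrix over `ℝ[x_1, …, x_N]` with entries `M_{j,i} = j · m_i · x_i^{j−1}`
(indices `0`-based, so row `j : Fin N` is row `j+1`), with cofactors `A_{u,i}`.
Then for every `u` and every `k ≥ 1` the polynomial `∑_i m_i x_i^{k−1} A_{u,i}`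
is divisible by the Vandermonde product `∏_{q<p} (x_q − x_p)`. -/
theorem vandermonde_divides_cofactor_sum (N' : ℕ) (m : Fin (N' + 1) → ℝ)
    (M : Matrix (Fin (N' + 1)) (Fin (N' + 1)) (MvPolynomial (Fin (N' + 1)) ℝ))
    (hM : ∀ j i, M j i =
      C (((j : ℕ) + 1 : ℕ) : ℝ) * C (m i) * (X i) ^ (j : ℕ))
    (u : Fin (N' + 1)) (k : ℕ) (hk : 1 ≤ k) :
    (∏ q : Fin (N' + 1), ∏ p ∈ Finset.Ioi q, (X q - X p)) ∣
      ∑ i : Fin (N' + 1), C (m i) * (X i) ^ (k - 1) * cofactor M u i := by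
  simpa using vandermonde_divides_cofactor_sum_general X (fun i ↦ C (m i)) M
    (fun j ↦ Polynomial.C (C (((j : ℕ) + 1 : ℕ) : ℝ)) * Polynomial.X ^ (j : ℕ))
    (fun j i ↦ by simp [hM, mul_assoc, mul_left_comm]) u (Polynomial.X ^ (k - 1))
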